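/- For all real numbers x, y with x > 0, y > 0 and x + y < 1/2, one has H_b(x, y) < x + y, and consequently K(H_b(x, y)) > K(x + y). -/

import Mathlib

/-- The stability function `H_b` of the bubble case. -/
noncomputable def Hb (x y : ℝ) : ℝ :=
  (4 / (4 - x * y)) * max (x * (2 + y) / (2 - y)) (y * (2 + x) / (2 - x))

/-- The threshold function `K(r) = (2/(1+r))·log(1 + (2/r)(1 + √(1+r)))`. -/
noncomputable def Kfun (r : ℝ) : ℝ :=
  (2 / (1 + r)) * Real.log (1 + (2 / r) * (1 + Real.sqrt (1 + r)))

/-!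
Clearing denominators and cancelling the common factor `y > 0`, the first branch of `H_b` is less
than `s = x + y` if and only if `x (2 - y) s < 4 (2 - 2 x - y)`; the second branch is the first with
`x` and `y` exchanged. As `y → 0` the condition becomes `s² + 4 s < 4`, so the largest bound on `s`
that suffices for all `x` and `y` is the positive root `2 (√2 - 1)` of `s² + 4 s - 4`, which exceeds
`1 / 2`. Rationalizing `(1 + √(1 + r)) / r = 1 / (√(1 + r) - 1)` shows that both factors of `K` are
positive and strictly decreasing.
-/

open Real Set

section StabilityFunction

variable {x y : ℝ}

theorem Hb_pos (hx : 0 < x) (hy : 0 < y) (hy2 : y < 2) (hxy : x * y < 4) : 0 < Hb x y := by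
  have hbranch : 0 < x * (2 + y) / (2 - y) := div_pos (by positivity) (sub_pos.2 hy2)
  exact mul_pos (div_pos four_pos (sub_pos.2 hxy)) (lt_max_of_lt_left hbranch)

theorem Hb_lt_iff (hxy : x * y < 4) {c : ℝ} :
    Hb x y < c ↔ 4 / (4 - x * y) * (x * (2 + y) / (2 - y)) < c ∧
      4 / (4 - y * x) * (y * (2 + x) / (2 - x)) < c := by
  have h4 : 0 ≤ 4 / (4 - x * y) := div_nonneg zero_le_four (sub_nonneg.2 hxy.le)
  rw [Hb, mul_max_of_nonneg _ _ h4, max_lt_iff, mul_comm y x]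

theorem Hb_branch_lt_add_iff (hxy : x * y < 4) (hy : 0 < y) (hy2 : y < 2) :
    4 / (4 - x * y) * (x * (2 + y) / (2 - y)) < x + y ↔
      x * (2 - y) * (x + y) < 4 * (2 - 2 * x - y) := by
  have factor : (x + y) * ((4 - x * y) * (2 - y)) - 4 * (x * (2 + y)) =
      y * (4 * (2 - 2 * x - y) - x * (2 - y) * (x + y)) := by ring
  rw [div_mul_div_comm, div_lt_iff₀ (mul_pos (sub_pos.2 hxy) (sub_pos.2 hy2)), ← sub_pos, factor,
    mul_pos_iff_of_pos_left hy, sub_pos]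

theorem Hb_lt_add_iff (hx : 0 < x) (hx2 : x < 2) (hy : 0 < y) (hy2 : y < 2) :
    Hb x y < x + y ↔ x * (2 - y) * (x + y) < 4 * (2 - 2 * x - y) ∧
      y * (2 - x) * (y + x) < 4 * (2 - 2 * y - x) := by
  have hxy : x * y < 4 := by nlinarith
  rw [Hb_lt_iff hxy, Hb_branch_lt_add_iff hxy hy hy2, add_comm x y,
    Hb_branch_lt_add_iff (mul_comm x y ▸ hxy) hx hx2]

theorem mul_two_sub_mul_add_lt (hx : 0 < x) (hy : 0 < y) (hxy : (x + y) ^ 2 + 4 * (x + y) ≤ 4) :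
    x * (2 - y) * (x + y) < 4 * (2 - 2 * x - y) := by
  have hxys : 0 < x * y * (x + y) := by positivity
  have hys : 0 < y * (x + y) := by positivity
  calc x * (2 - y) * (x + y)
      = 2 * (x + y) ^ 2 - 2 * (y * (x + y)) - x * y * (x + y) := by ring
    _ < 2 * (x + y) ^ 2 + 4 * y := by linarith
    _ ≤ 8 - 8 * (x + y) + 4 * y := by linarith
    _ = 4 * (2 - 2 * x - y) := by ring

theorem sq_add_four_mul_le_four {s : ℝ} (hs : 0 ≤ s) (hs' : s ≤ 2 * (√2 - 1)) :
    s ^ 2 + 4 * s ≤ 4 := by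
  have h : (s + 2) ^ 2 ≤ (2 * √2) ^ 2 := by gcongr; linarith
  rw [mul_pow, sq_sqrt zero_le_two] at h
  linarith

theorem Hb_lt_add (hx : 0 < x) (hy : 0 < y) (hxy : x + y ≤ 2 * (√2 - 1)) :
    Hb x y < x + y := by
  have hs : (x + y) ^ 2 + 4 * (x + y) ≤ 4 := sq_add_four_mul_le_four (by positivity) hxy
  have hs2 : x + y < 2 := by nlinarith
  rw [Hb_lt_add_iff hx (by linarith) hy (by linarith)]
  exact ⟨mul_two_sub_mul_add_lt hx hy hs, mul_two_sub_mul_add_lt hy hx (add_comm x y ▸ hs)⟩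

end StabilityFunction

section Threshold

theorem div_mul_one_add_sqrt_one_add {r : ℝ} (hr : -1 ≤ r) (hr0 : r ≠ 0) (c : ℝ) :
    c / r * (1 + √(1 + r)) = c / (√(1 + r) - 1) := by
  have hsq : √(1 + r) ^ 2 = 1 + r := sq_sqrt (by linarith)
  have hne : √(1 + r) - 1 ≠ 0 := fun h => hr0 (by rw [sub_eq_zero.1 h] at hsq; linarith)
  field_simp
  linear_combination c * hsq

theorem strictAntiOn_div_mul_one_add_sqrt_one_add {c : ℝ} (hc : 0 < c) :
    StrictAntiOn (fun r : ℝ => c / r * (1 + √(1 + r))) (Ioi 0) := by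
  intro a (ha : 0 < a) b (hb : 0 < b) hab
  have h1 : 1 < √(1 + a) := (lt_sqrt zero_le_one).2 (by linarith)
  have hlt : √(1 + a) < √(1 + b) := sqrt_lt_sqrt (by linarith) (by linarith)
  simp only [div_mul_one_add_sqrt_one_add (by linarith : -1 ≤ a) ha.ne',
    div_mul_one_add_sqrt_one_add (by linarith : -1 ≤ b) hb.ne']
  exact div_lt_div_of_pos_left hc (sub_pos.2 h1) (by linarith)

theorem Kfun_strictAntiOn : StrictAntiOn Kfun (Ioi 0) := by
  intro a (ha : 0 < a) b (hb : 0 < b) hab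
  have harg : 2 / b * (1 + √(1 + b)) < 2 / a * (1 + √(1 + a)) :=
    strictAntiOn_div_mul_one_add_sqrt_one_add two_pos ha hb hab
  have hb' : 0 < 2 / b * (1 + √(1 + b)) := by positivity
  have hlog : 0 ≤ log (1 + 2 / b * (1 + √(1 + b))) := log_nonneg (by linarith)
  unfold Kfun
  gcongr

end Threshold

theorem stmt15_general (x y : ℝ) (hx : 0 < x) (hy : 0 < y) (hxy : x + y ≤ 2 * (√2 - 1)) :
    Hb x y < x + y ∧ Kfun (Hb x y) > Kfun (x + y) := by
  have hs2 : x + y < 2 := by linarith [sqrt_two_lt_three_halves]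
  have hH : Hb x y < x + y := Hb_lt_add hx hy hxy
  have hpos : 0 < Hb x y := Hb_pos hx hy (by linarith) (by nlinarith)
  exact ⟨hH, Kfun_strictAntiOn hpos (add_pos hx hy) hH⟩

/-- For `x, y > 0` with `x + y < 1/2`, one has `H_b(x,y) < x + y`, hence
`K(H_b(x,y)) > K(x + y)`: the bubble-case threshold improves the Amadori–Corli one. -/
theorem stmt15 (x y : ℝ) (hx : 0 < x) (hy : 0 < y) (hxy : x + y < 1 / 2) :
    Hb x y < x + y ∧ Kfun (Hb x y) > Kfun (x + y) := by
  have hsqrt : 5 / 4 ≤ √2 := le_sqrt_of_sq_le (by norm_num)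
  exact stmt15_general x y hx hy (by linarith)
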